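/- (Existence of a Lyapunov function for the observer error dynamics.) Let θ ≥ 0, let Σ : ℝ² → M₂(ℝ) be continuous and satisfy Assumption 2, suppose Assumption 1 holds with constant ω > 0, and let Ā₁ ∈ M₂(ℝ) be Hurwitz (every eigenvalue has negative real part). Then there exist a symmetric positive definite matrix P ∈ M₂(ℝ) and constants φ, ρ > 0, independent of the input, with the following property: for every T > 0, every continuous v : [0,T] → ℝ², every X̃ ∈ C¹([0,T]; ℝ²), and every C¹ function z̃ : [0,1]×[0,T] → ℝ² satisfying X̃′(t) = Ā₁X̃(t) + G₁(𝒦₁ z̃(·,t)), ∂z̃/∂t(ξ,t) + Λ ∂z̃/∂ξ(ξ,t) = θ Σ(v(t))[z̃(ξ,t) + (𝒦₂ z̃(·,t))] + (𝒦₃ z̃(·,t)) on (0,1)×(0,T), and z̃(0,t) = 0, the function V₀(t) := (1/2)X̃(t)ᵀPX̃(t) + (φ/2)∫₀¹ z̃(ξ,t)ᵀQ(ξ)z̃(ξ,t) dξ satisfies V₀′(t) ≤ −ρ V₀(t) for all t ∈ (0,T). -/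

import Mathlib

open MeasureTheory Matrix Set

noncomputable section

attribute [local instance] Matrix.normedAddCommGroup Matrix.normedSpace

abbrev Vec2 := Fin 2 → ℝ
abbrev Mat2 := Matrix (Fin 2) (Fin 2) ℝ

/-- Nondimensional pressure distribution `p̄(ξ) = (a/(1-e^{-a})) e^{-aξ}`. -/
def pbar (a ξ : ℝ) : ℝ := a / (1 - Real.exp (-a)) * Real.exp (-a * ξ)

/-- The physical parameters of the single-track tire model. -/
structure TireParams where
  vx : ℝ
  L1 : ℝ
  L2 : ℝ
  Fz1 : ℝ
  Fz2 : ℝ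
  σ1 : ℝ
  σ2 : ℝ
  a1 : ℝ
  a2 : ℝ
  φ1 : ℝ
  φ2 : ℝ
  vx_pos : 0 < vx
  L1_pos : 0 < L1
  L2_pos : 0 < L2
  Fz1_pos : 0 < Fz1
  Fz2_pos : 0 < Fz2
  σ1_pos : 0 < σ1
  σ2_pos : 0 < σ2
  a1_pos : 0 < a1
  a2_pos : 0 < a2
  φ1_mem : φ1 ∈ Set.Ioc (0:ℝ) 1
  φ2_mem : φ2 ∈ Set.Ioc (0:ℝ) 1

namespace TireParams

variable (P : TireParams)

def ψ1 : ℝ := 1 - P.φ1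
def ψ2 : ℝ := 1 - P.φ2

def Λmat : Mat2 := Matrix.diagonal ![P.vx / P.L1, P.vx / P.L2]

def Hmat : Mat2 := (2:ℝ) • Matrix.diagonal ![P.φ1, P.φ2]

def K1 (ξ : ℝ) : Mat2 :=
  Matrix.diagonal ![P.Fz1 * P.σ1 * pbar P.a1 ξ, P.Fz2 * P.σ2 * pbar P.a2 ξ]

def K2 (ξ : ℝ) : Mat2 :=
  -Matrix.diagonal ![P.ψ1 * pbar P.a1 ξ, P.ψ2 * pbar P.a2 ξ]

def K3 (ξ : ℝ) : Mat2 :=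
  -P.vx • Matrix.diagonal ![P.ψ1 / P.L1 * deriv (pbar P.a1) ξ, P.ψ2 / P.L2 * deriv (pbar P.a2) ξ]

def K4 : Mat2 :=
  P.vx • Matrix.diagonal ![P.ψ1 / P.L1 * pbar P.a1 1, P.ψ2 / P.L2 * pbar P.a2 1]

def Q (ξ : ℝ) : Mat2 := P.K1 ξ * (P.Hmat)⁻¹

/-- `(𝒦ζ) = ∫₀¹ K(ξ) ζ(ξ) dξ`. -/
def Kop (K : ℝ → Mat2) (ζ : ℝ → Vec2) : Vec2 := ∫ ξ in (0:ℝ)..1, (K ξ).mulVec (ζ ξ)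

def K1op (ζ : ℝ → Vec2) : Vec2 := Kop P.K1 ζ

def K2op (ζ : ℝ → Vec2) : Vec2 := Kop P.K2 ζ

/-- `(𝒦₃ζ) = ∫₀¹ K₃(ξ)ζ(ξ)dξ + K₄ ζ(1)`. -/
def K3op (ζ : ℝ → Vec2) : Vec2 := Kop P.K3 ζ + (P.K4).mulVec (ζ 1)

/-- `(𝒜ζ)(ξ) = -Λ ζ'(ξ) + (𝒦₃ζ)`, expressed through a given derivative `ζ'`. -/
def Aop (ζ ζ' : ℝ → Vec2) (ξ : ℝ) : Vec2 := -(P.Λmat).mulVec (ζ' ξ) + P.K3op ζ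

end TireParams

/-- `ζ` is C¹ on `[0,1]` with derivative `ζ'`. -/
def IsC1On01 (ζ ζ' : ℝ → Vec2) : Prop :=
  (∀ ξ ∈ Icc (0:ℝ) 1, HasDerivWithinAt ζ (ζ' ξ) (Icc (0:ℝ) 1) ξ) ∧
    ContinuousOn ζ' (Icc (0:ℝ) 1)

/-- Square integrability on `(0,1)`. -/
def SqIntegrableOn01 (ζ : ℝ → Vec2) : Prop :=
  Measurable ζ ∧ IntervalIntegrable (fun ξ => ∑ i, (ζ ξ i) ^ 2) volume 0 1

/-- Assumption 1 (strict dissipativity of `𝒜`). -/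
def Assumption1 (P : TireParams) (ω : ℝ) : Prop :=
  ∀ ζ ζ' : ℝ → Vec2, IsC1On01 ζ ζ' → ζ 0 = 0 →
    (∫ ξ in (0:ℝ)..1, P.Aop ζ ζ' ξ ⬝ᵥ (P.Q ξ).mulVec (ζ ξ)) ≤
      -ω * ∫ ξ in (0:ℝ)..1, ∑ i, (ζ ξ i) ^ 2

/-- Assumption 2 (dissipativity of the source `Σ`). -/
def Assumption2 (P : TireParams) (S : Vec2 → Mat2) : Prop :=
  ∀ y : Vec2, ∀ ζ : ℝ → Vec2, SqIntegrableOn01 ζ →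
    (∫ ξ in (0:ℝ)..1, ζ ξ ⬝ᵥ (P.Q ξ).mulVec ((S y).mulVec (ζ ξ + P.K2op ζ))) ≤ 0

def G1mat (m Iz l1 l2 : ℝ) : Mat2 := -!![1/m, 1/m; l1/Iz, -l2/Iz]

/-- A real 2×2 matrix is Hurwitz if every (complex) eigenvalue has negative real part. -/
def IsHurwitz (A : Mat2) : Prop :=
  ∀ μ : ℂ, μ ∈ spectrum ℂ (A.map (algebraMap ℝ ℂ)) → μ.re < 0

/-- `z̃` (with partial derivatives `zξ`, `zt`) is a classical solution on `[0,T]` of the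
(unforced) observer-error tire PDE `∂z̃/∂t + Λ∂z̃/∂ξ = θΣ(v(t))[z̃ + 𝒦₂z̃] + 𝒦₃z̃`, `z̃(0,t)=0`. -/
def IsErrorPDESol (P : TireParams) (θ : ℝ) (S : Vec2 → Mat2) (T : ℝ)
    (v : ℝ → Vec2) (z zξ zt : ℝ → ℝ → Vec2) : Prop :=
  (∀ t ∈ Icc (0:ℝ) T, ∀ ξ ∈ Icc (0:ℝ) 1,
      HasDerivWithinAt (fun s => z s t) (zξ ξ t) (Icc (0:ℝ) 1) ξ) ∧
  (∀ ξ ∈ Icc (0:ℝ) 1, ∀ t ∈ Icc (0:ℝ) T,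
      HasDerivWithinAt (fun s => z ξ s) (zt ξ t) (Icc (0:ℝ) T) t) ∧
  ContinuousOn (fun p : ℝ × ℝ => z p.1 p.2) (Icc (0:ℝ) 1 ×ˢ Icc (0:ℝ) T) ∧
  ContinuousOn (fun p : ℝ × ℝ => zξ p.1 p.2) (Icc (0:ℝ) 1 ×ˢ Icc (0:ℝ) T) ∧
  ContinuousOn (fun p : ℝ × ℝ => zt p.1 p.2) (Icc (0:ℝ) 1 ×ˢ Icc (0:ℝ) T) ∧
  (∀ ξ ∈ Ioo (0:ℝ) 1, ∀ t ∈ Ioo (0:ℝ) T,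
      zt ξ t + (P.Λmat).mulVec (zξ ξ t) =
        θ • (S (v t)).mulVec (z ξ t + P.K2op (fun s => z s t)) + P.K3op (fun s => z s t)) ∧
  (∀ t ∈ Icc (0:ℝ) T, z 0 t = 0)

lemma pbar_continuous (a : ℝ) : Continuous (pbar a) := by
  unfold pbar; fun_prop

def qf (P : TireParams) (i : Fin 2) (ξ : ℝ) : ℝ :=
  ![P.Fz1 * P.σ1 * pbar P.a1 ξ / (2 * P.φ1), P.Fz2 * P.σ2 * pbar P.a2 ξ / (2 * P.φ2)] i

def kf (P : TireParams) (i : Fin 2) (ξ : ℝ) : ℝ :=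
  ![P.Fz1 * P.σ1 * pbar P.a1 ξ, P.Fz2 * P.σ2 * pbar P.a2 ξ] i

lemma qf_cont (P : TireParams) (i : Fin 2) : Continuous (qf P i) := by
  have h1 := pbar_continuous P.a1
  have h2 := pbar_continuous P.a2
  unfold qf
  fin_cases i <;> simp <;> fun_prop

lemma kf_cont (P : TireParams) (i : Fin 2) : Continuous (kf P i) := by
  have h1 := pbar_continuous P.a1
  have h2 := pbar_continuous P.a2
  unfold kf
  fin_cases i <;> simp <;> fun_prop

lemma Q_eq (P : TireParams) (ξ : ℝ) : P.Q ξ = Matrix.diagonal (fun i => qf P i ξ) := by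
  have h1 := P.φ1_mem.1
  have h2 := P.φ2_mem.1
  have hinv : (P.Hmat)⁻¹ = Matrix.diagonal ![1 / (2 * P.φ1), 1 / (2 * P.φ2)] := by
    apply Matrix.inv_eq_right_inv
    unfold TireParams.Hmat
    ext i j
    fin_cases i <;> fin_cases j <;> simp [Matrix.diagonal, Matrix.mul_apply] <;> field_simp
  unfold TireParams.Q TireParams.K1
  rw [hinv]
  ext i j
  fin_cases i <;> fin_cases j <;> simp [qf] <;> field_simp

lemma Q_dot (P : TireParams) (ξ : ℝ) (u w : Vec2) :
    u ⬝ᵥ (P.Q ξ).mulVec w = qf P 0 ξ * (u 0 * w 0) + qf P 1 ξ * (u 1 * w 1) := by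
  rw [Q_eq]
  simp [dotProduct, Matrix.mulVec_diagonal, Fin.sum_univ_two]
  ring

lemma K1_mulVec (P : TireParams) (ξ : ℝ) (w : Vec2) :
    (P.K1 ξ).mulVec w = fun i => kf P i ξ * w i := by
  unfold TireParams.K1
  ext i
  rw [Matrix.mulVec_diagonal]
  rfl

lemma uIcc01 : uIcc (0:ℝ) 1 = Icc 0 1 := uIcc_of_le zero_le_one

lemma ii_of_cont {E : Type*} [NormedAddCommGroup E] {f : ℝ → E}
    (h : ContinuousOn f (Icc (0:ℝ) 1)) : IntervalIntegrable f volume 0 1 :=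
  ContinuousOn.intervalIntegrable (by rwa [uIcc01])

lemma sq_integral_le {f : ℝ → ℝ} (h : ContinuousOn f (Icc (0:ℝ) 1)) :
    (∫ ξ in (0:ℝ)..1, f ξ) ^ 2 ≤ ∫ ξ in (0:ℝ)..1, f ξ ^ 2 := by
  set c := ∫ ξ in (0:ℝ)..1, f ξ with hc
  have h0 : 0 ≤ ∫ ξ in (0:ℝ)..1, (f ξ ^ 2 - (2 * c) * f ξ + c ^ 2) := by
    apply intervalIntegral.integral_nonneg zero_le_one
    intro u _
    nlinarith [sq_nonneg (f u - c)]
  have hf := ii_of_cont h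
  have hf2 : IntervalIntegrable (fun ξ => f ξ ^ 2) volume 0 1 := ii_of_cont (h.pow 2)
  rw [intervalIntegral.integral_add (hf2.sub (hf.const_mul _)) (by simp),
    intervalIntegral.integral_sub hf2 (hf.const_mul _),
    intervalIntegral.integral_const_mul] at h0
  simp at h0
  rw [← hc] at h0
  nlinarith

lemma kappa_bound (P : TireParams) : ∃ M : ℝ, 0 ≤ M ∧ ∀ ζ : ℝ → Vec2,
    ContinuousOn ζ (Icc (0:ℝ) 1) →
    (P.K1op ζ 0) ^ 2 + (P.K1op ζ 1) ^ 2 ≤ M * ∫ ξ in (0:ℝ)..1, ∑ i, (ζ ξ i) ^ 2 := by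
  obtain ⟨B0, hB0⟩ := isCompact_Icc.exists_bound_of_continuousOn
    (kf_cont P 0).continuousOn (s := Icc (0:ℝ) 1)
  obtain ⟨B1, hB1⟩ := isCompact_Icc.exists_bound_of_continuousOn
    (kf_cont P 1).continuousOn (s := Icc (0:ℝ) 1)
  refine ⟨B0 ^ 2 + B1 ^ 2, by positivity, fun ζ hζ => ?_⟩
  have hζi : ∀ i, ContinuousOn (fun ξ => ζ ξ i) (Icc (0:ℝ) 1) := fun i =>
    (continuous_apply i).comp_continuousOn hζ
  have hkz : ∀ i, ContinuousOn (fun ξ => kf P i ξ * ζ ξ i) (Icc (0:ℝ) 1) := fun i =>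
    (kf_cont P i).continuousOn.mul (hζi i)
  have hK : ∀ i, P.K1op ζ i = ∫ ξ in (0:ℝ)..1, kf P i ξ * ζ ξ i := by
    intro i
    unfold TireParams.K1op TireParams.Kop
    simp only [K1_mulVec]
    have hint : IntervalIntegrable (fun ξ => (fun i => kf P i ξ * ζ ξ i : Vec2)) volume 0 1 :=
      ii_of_cont (continuousOn_pi.2 hkz)
    exact ((ContinuousLinearMap.proj (R := ℝ) (φ := fun _ : Fin 2 => ℝ)
      i).intervalIntegral_comp_comm hint).symm
  rw [hK, hK]
  refine (add_le_add (sq_integral_le (hkz 0)) (sq_integral_le (hkz 1))).trans ?_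
  have hI : ∀ i, IntervalIntegrable (fun ξ => (kf P i ξ * ζ ξ i) ^ 2) volume 0 1 := fun i =>
    ii_of_cont ((hkz i).pow 2)
  rw [← intervalIntegral.integral_add (hI 0) (hI 1),
    ← intervalIntegral.integral_const_mul]
  apply intervalIntegral.integral_mono_on zero_le_one
  · exact ii_of_cont (((hkz 0).pow 2).add ((hkz 1).pow 2))
  · refine ii_of_cont (continuousOn_const.mul ?_)
    exact continuousOn_finset_sum _ fun i _ => (hζi i).pow 2
  · intro ξ hξ
    have a0 := hB0 ξ hξ
    have a1 := hB1 ξ hξ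
    rw [Real.norm_eq_abs] at a0 a1
    have b0 : (kf P 0 ξ) ^ 2 ≤ B0 ^ 2 := sq_le_sq' (abs_le.1 a0).1 (abs_le.1 a0).2
    have b1 : (kf P 1 ξ) ^ 2 ≤ B1 ^ 2 := sq_le_sq' (abs_le.1 a1).1 (abs_le.1 a1).2
    rw [Fin.sum_univ_two, mul_pow, mul_pow]
    nlinarith [mul_le_mul_of_nonneg_right b0 (sq_nonneg (ζ ξ 0)),
      mul_le_mul_of_nonneg_right b1 (sq_nonneg (ζ ξ 1)),
      mul_nonneg (sq_nonneg B0) (sq_nonneg (ζ ξ 1)), mul_nonneg (sq_nonneg B1) (sq_nonneg (ζ ξ 0))]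

lemma W_bound (P : TireParams) : ∃ M : ℝ, 0 < M ∧ ∀ ζ : ℝ → Vec2,
    ContinuousOn ζ (Icc (0:ℝ) 1) →
    (∫ ξ in (0:ℝ)..1, ζ ξ ⬝ᵥ (P.Q ξ).mulVec (ζ ξ)) ≤ M * ∫ ξ in (0:ℝ)..1, ∑ i, (ζ ξ i) ^ 2 := by
  obtain ⟨B0, hB0⟩ := isCompact_Icc.exists_bound_of_continuousOn
    (qf_cont P 0).continuousOn (s := Icc (0:ℝ) 1)
  obtain ⟨B1, hB1⟩ := isCompact_Icc.exists_bound_of_continuousOn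
    (qf_cont P 1).continuousOn (s := Icc (0:ℝ) 1)
  refine ⟨|B0| + |B1| + 1, by positivity, fun ζ hζ => ?_⟩
  have hζi : ∀ i, ContinuousOn (fun ξ => ζ ξ i) (Icc (0:ℝ) 1) := fun i =>
    (continuous_apply i).comp_continuousOn hζ
  rw [← intervalIntegral.integral_const_mul]
  simp only [Q_dot]
  apply intervalIntegral.integral_mono_on zero_le_one
  · have h0 := (qf_cont P 0).continuousOn (s := Icc (0:ℝ) 1)
    have h1 := (qf_cont P 1).continuousOn (s := Icc (0:ℝ) 1)
    exact ii_of_cont ((h0.mul ((hζi 0).mul (hζi 0))).add (h1.mul ((hζi 1).mul (hζi 1))))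
  · refine ii_of_cont (continuousOn_const.mul ?_)
    exact continuousOn_finset_sum _ fun i _ => (hζi i).pow 2
  · intro ξ hξ
    have a0 := (le_abs_self _).trans ((hB0 ξ hξ).trans (le_abs_self B0))
    have a1 := (le_abs_self _).trans ((hB1 ξ hξ).trans (le_abs_self B1))
    rw [Fin.sum_univ_two]
    nlinarith [mul_le_mul_of_nonneg_right a0 (sq_nonneg (ζ ξ 0)),
      mul_le_mul_of_nonneg_right a1 (sq_nonneg (ζ ξ 1)), sq_nonneg (ζ ξ 0), sq_nonneg (ζ ξ 1),
      mul_nonneg (abs_nonneg B0) (sq_nonneg (ζ ξ 1)), mul_nonneg (abs_nonneg B1) (sq_nonneg (ζ ξ 0))]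

lemma hurwitz_root (A : Mat2) (hA : IsHurwitz A) (μ : ℂ)
    (h : (μ - A 0 0) * (μ - A 1 1) - A 0 1 * A 1 0 = 0) : μ.re < 0 := by
  apply hA
  apply Matrix.mem_spectrum_of_isRoot_charpoly
  rw [Polynomial.IsRoot, Matrix.eval_charpoly, Matrix.det_fin_two]
  simp
  linear_combination h

lemma hurwitz_tr_det (A : Mat2) (hA : IsHurwitz A) :
    A 0 0 + A 1 1 < 0 ∧ 0 < A 0 0 * A 1 1 - A 0 1 * A 1 0 := by
  set τ := A 0 0 + A 1 1 with hτ
  set δ := A 0 0 * A 1 1 - A 0 1 * A 1 0 with hδ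
  rcases le_or_gt 0 (τ ^ 2 - 4 * δ) with hd | hd
  · have hs := Real.sq_sqrt hd
    set s := Real.sqrt (τ ^ 2 - 4 * δ) with hsdef
    have hs0 : 0 ≤ s := Real.sqrt_nonneg _
    have key := hurwitz_root A hA (((τ + s) / 2 : ℝ) : ℂ) (by
      norm_cast
      simp only [hτ, hδ] at hs ⊢
      nlinarith)
    rw [Complex.ofReal_re] at key
    constructor
    · linarith
    · nlinarith
  · have hs := Real.sq_sqrt (x := -(τ ^ 2 - 4 * δ)) (by linarith)
    set s := Real.sqrt (-(τ ^ 2 - 4 * δ)) with hsdef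
    have key := hurwitz_root A hA ⟨τ / 2, s / 2⟩ (by
      simp only [hτ, hδ] at hs ⊢
      apply Complex.ext <;> simp <;> nlinarith)
    constructor
    · have key' : τ / 2 < 0 := key
      linarith
    · nlinarith [sq_nonneg τ]

def PL (A : Mat2) : Mat2 :=
  !![A 0 0 * A 1 1 - A 0 1 * A 1 0 + A 1 0 ^ 2 + A 1 1 ^ 2, -(A 0 0 * A 1 0 + A 0 1 * A 1 1);
     -(A 0 0 * A 1 0 + A 0 1 * A 1 1), A 0 0 * A 1 1 - A 0 1 * A 1 0 + A 0 0 ^ 2 + A 0 1 ^ 2]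

lemma dot_expand (M : Mat2) (x y : Vec2) : x ⬝ᵥ M.mulVec y =
    x 0 * (M 0 0 * y 0 + M 0 1 * y 1) + x 1 * (M 1 0 * y 0 + M 1 1 * y 1) := by
  simp [dotProduct, Matrix.mulVec, Fin.sum_univ_two]

lemma PL_posDef (A : Mat2) (h : 0 < A 0 0 * A 1 1 - A 0 1 * A 1 0) : (PL A).PosDef := by
  apply Matrix.PosDef.of_dotProduct_mulVec_pos
  · ext i j
    fin_cases i <;> fin_cases j <;> simp [PL]
  · intro x hx
    rw [star_trivial, dot_expand]
    simp [PL]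
    have hne : 0 < x 0 ^ 2 + x 1 ^ 2 := by
      by_contra hcon
      apply hx
      have e0 : x 0 = 0 := by nlinarith [sq_nonneg (x 0), sq_nonneg (x 1)]
      have e1 : x 1 = 0 := by nlinarith [sq_nonneg (x 0), sq_nonneg (x 1)]
      ext i; fin_cases i <;> simp [e0, e1]
    nlinarith [mul_pos h hne, sq_nonneg (A 1 1 * x 0 - A 0 1 * x 1),
      sq_nonneg (A 1 0 * x 0 - A 0 0 * x 1)]

lemma PL_lyap (A : Mat2) (x : Vec2) : x ⬝ᵥ (PL A).mulVec (A.mulVec x) =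
    (A 0 0 + A 1 1) * (A 0 0 * A 1 1 - A 0 1 * A 1 0) * (x 0 ^ 2 + x 1 ^ 2) := by
  rw [dot_expand]
  simp [PL, Matrix.mulVec, dotProduct, Fin.sum_univ_two]
  ring

lemma young (c x k e : ℝ) (he : 0 < e) : c * x * k ≤ e / 2 * x ^ 2 + c ^ 2 / (2 * e) * k ^ 2 := by
  have : e / 2 * x ^ 2 + c ^ 2 / (2 * e) * k ^ 2 - c * x * k = (e * x - c * k) ^ 2 / (2 * e) := by
    field_simp; ring
  have h2 : 0 ≤ (e * x - c * k) ^ 2 / (2 * e) := by positivity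
  linarith

lemma cross_bound (N : Mat2) (e : ℝ) (he : 0 < e) : ∃ C : ℝ, 0 ≤ C ∧ ∀ x k : Vec2,
    x ⬝ᵥ N.mulVec k ≤ e * (x 0 ^ 2 + x 1 ^ 2) + C * (k 0 ^ 2 + k 1 ^ 2) := by
  refine ⟨(N 0 0 ^ 2 / (2 * e) + N 0 1 ^ 2 / (2 * e)) + (N 1 0 ^ 2 / (2 * e) + N 1 1 ^ 2 / (2 * e)),
    by positivity, fun x k => ?_⟩
  rw [dot_expand]
  have p : ∀ a b : ℝ, 0 ≤ a ^ 2 / (2 * e) * b ^ 2 := fun a b => by positivity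
  nlinarith [young (N 0 0) (x 0) (k 0) e he, young (N 0 1) (x 0) (k 1) e he,
    young (N 1 0) (x 1) (k 0) e he, young (N 1 1) (x 1) (k 1) e he,
    p (N 0 0) (k 1), p (N 0 1) (k 0), p (N 1 0) (k 1), p (N 1 1) (k 0)]

lemma quad_bound (M : Mat2) : ∃ C : ℝ, 0 < C ∧ ∀ x : Vec2,
    x ⬝ᵥ M.mulVec x ≤ C * (x 0 ^ 2 + x 1 ^ 2) := by
  obtain ⟨C, hC, h⟩ := cross_bound M 1 one_pos
  exact ⟨1 + C, by positivity, fun x => (h x x).trans (by linarith)⟩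

lemma quad_deriv (M : Mat2) (hM : M 0 1 = M 1 0) (X : ℝ → Vec2) (X' : Vec2) (t : ℝ)
    (h : HasDerivAt X X' t) :
    HasDerivAt (fun τ => X τ ⬝ᵥ M.mulVec (X τ)) (2 * (X t ⬝ᵥ M.mulVec X')) t := by
  have hi := hasDerivAt_pi.1 h
  have h0 := hi 0
  have h1 := hi 1
  simp only [dot_expand]
  have := (h0.mul ((h0.const_mul (M 0 0)).add (h1.const_mul (M 0 1)))).add
    (h1.mul ((h0.const_mul (M 1 0)).add (h1.const_mul (M 1 1))))
  refine this.congr_deriv ?_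
  simp only [Pi.add_apply, hM]
  ring

lemma W_deriv (P : TireParams) (T : ℝ) (z zt : ℝ → ℝ → Vec2)
    (hd : ∀ ξ ∈ Icc (0:ℝ) 1, ∀ t ∈ Icc (0:ℝ) T,
      HasDerivWithinAt (fun s => z ξ s) (zt ξ t) (Icc (0:ℝ) T) t)
    (hz : ContinuousOn (fun p : ℝ × ℝ => z p.1 p.2) (Icc (0:ℝ) 1 ×ˢ Icc (0:ℝ) T))
    (hzt : ContinuousOn (fun p : ℝ × ℝ => zt p.1 p.2) (Icc (0:ℝ) 1 ×ˢ Icc (0:ℝ) T))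
    (t : ℝ) (ht : t ∈ Ioo (0:ℝ) T) :
    HasDerivAt (fun τ => ∫ ξ in (0:ℝ)..1, z ξ τ ⬝ᵥ (P.Q ξ).mulVec (z ξ τ))
      (∫ ξ in (0:ℝ)..1, 2 * (zt ξ t ⬝ᵥ (P.Q ξ).mulVec (z ξ t))) t := by
  have hzi : ∀ i, ContinuousOn (fun p : ℝ × ℝ => z p.1 p.2 i) (Icc (0:ℝ) 1 ×ˢ Icc (0:ℝ) T) :=
    fun i => (continuous_apply i).comp_continuousOn hz
  have hzti : ∀ i, ContinuousOn (fun p : ℝ × ℝ => zt p.1 p.2 i) (Icc (0:ℝ) 1 ×ˢ Icc (0:ℝ) T) :=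
    fun i => (continuous_apply i).comp_continuousOn hzt
  have hq : ∀ i, ContinuousOn (fun p : ℝ × ℝ => qf P i p.1) (Icc (0:ℝ) 1 ×ˢ Icc (0:ℝ) T) :=
    fun i => ((qf_cont P i).comp continuous_fst).continuousOn
  have hF : ContinuousOn (fun p : ℝ × ℝ => z p.1 p.2 ⬝ᵥ (P.Q p.1).mulVec (z p.1 p.2))
      (Icc (0:ℝ) 1 ×ˢ Icc (0:ℝ) T) := by
    simp only [Q_dot]
    exact ((hq 0).mul ((hzi 0).mul (hzi 0))).add ((hq 1).mul ((hzi 1).mul (hzi 1)))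
  have hF' : ContinuousOn (fun p : ℝ × ℝ => 2 * (zt p.1 p.2 ⬝ᵥ (P.Q p.1).mulVec (z p.1 p.2)))
      (Icc (0:ℝ) 1 ×ˢ Icc (0:ℝ) T) := by
    simp only [Q_dot]
    exact continuousOn_const.mul
      (((hq 0).mul ((hzti 0).mul (hzi 0))).add ((hq 1).mul ((hzti 1).mul (hzi 1))))
  obtain ⟨B, hB⟩ := (isCompact_Icc.prod isCompact_Icc).exists_bound_of_continuousOn hF'
  have slice : ∀ {g : ℝ × ℝ → ℝ}, ContinuousOn g (Icc (0:ℝ) 1 ×ˢ Icc (0:ℝ) T) →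
      ∀ τ ∈ Icc (0:ℝ) T, IntervalIntegrable (fun ξ => g (ξ, τ)) volume 0 1 := by
    intro g hg τ hτ
    apply ii_of_cont
    exact hg.comp (by fun_prop) (fun ξ hξ => ⟨hξ, hτ⟩)
  have hmem : Ioo (0:ℝ) T ∈ nhds t := Ioo_mem_nhds ht.1 ht.2
  have htc : t ∈ Icc (0:ℝ) T := Ioo_subset_Icc_self ht
  have hsub : ∀ ξ ∈ uIoc (0:ℝ) 1, ξ ∈ Icc (0:ℝ) 1 := by
    intro ξ hξ
    rw [uIoc_of_le zero_le_one] at hξ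
    exact Ioc_subset_Icc_self hξ
  refine (intervalIntegral.hasDerivAt_integral_of_dominated_loc_of_deriv_le
    (F := fun τ ξ => z ξ τ ⬝ᵥ (P.Q ξ).mulVec (z ξ τ))
    (F' := fun τ ξ => 2 * (zt ξ τ ⬝ᵥ (P.Q ξ).mulVec (z ξ τ)))
    (bound := fun _ => B) hmem ?_ (slice hF t htc) ?_ ?_ (by simp) ?_).2
  · filter_upwards [hmem] with τ hτ
    exact (slice hF τ (Ioo_subset_Icc_self hτ)).def'.aestronglyMeasurable
  · exact (slice hF' t htc).def'.aestronglyMeasurable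
  · refine Filter.Eventually.of_forall fun ξ hξ τ hτ => ?_
    exact hB (ξ, τ) ⟨hsub ξ hξ, Ioo_subset_Icc_self hτ⟩
  · refine Filter.Eventually.of_forall fun ξ hξ τ hτ => ?_
    have hdd : HasDerivAt (fun s => z ξ s) (zt ξ τ) τ :=
      (hd ξ (hsub ξ hξ) τ (Ioo_subset_Icc_self hτ)).hasDerivAt (Icc_mem_nhds hτ.1 hτ.2)
    have hsym : (P.Q ξ) 0 1 = (P.Q ξ) 1 0 := by rw [Q_eq]; simp
    refine (quad_deriv (P.Q ξ) hsym _ _ _ hdd).congr_deriv ?_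
    rw [Q_dot, Q_dot]
    ring

lemma W_dissip (P : TireParams) (θ : ℝ) (hθ : 0 ≤ θ) (S : Vec2 → Mat2)
    (ω : ℝ) (h1 : Assumption1 P ω) (h2 : Assumption2 P S) (y : Vec2)
    (ζ ζ' ζt : ℝ → Vec2) (hC : IsC1On01 ζ ζ') (h0 : ζ 0 = 0)
    (hpde : ∀ ξ ∈ Ioo (0:ℝ) 1, ζt ξ + (P.Λmat).mulVec (ζ' ξ) =
        θ • (S y).mulVec (ζ ξ + P.K2op ζ) + P.K3op ζ) :
    (∫ ξ in (0:ℝ)..1, 2 * (ζt ξ ⬝ᵥ (P.Q ξ).mulVec (ζ ξ))) ≤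
      -(2 * ω) * ∫ ξ in (0:ℝ)..1, ∑ i, (ζ ξ i) ^ 2 := by
  have hζ : ContinuousOn ζ (Icc (0:ℝ) 1) := fun ξ hξ => (hC.1 ξ hξ).continuousWithinAt
  have hζ' := hC.2
  have A1 := h1 ζ ζ' hC h0
  set η : ℝ → Vec2 := IccExtend (zero_le_one' ℝ) ((Icc (0:ℝ) 1).restrict ζ) with hη
  have hηc : Continuous η := (continuousOn_iff_continuous_restrict.1 hζ).Icc_extend'
  have hηe : ∀ ξ ∈ Icc (0:ℝ) 1, η ξ = ζ ξ := fun ξ hξ => by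
    rw [hη, IccExtend_of_mem _ _ hξ]; rfl
  have hK2 : P.K2op η = P.K2op ζ := by
    unfold TireParams.K2op TireParams.Kop
    apply intervalIntegral.integral_congr
    intro ξ hξ
    rw [uIcc01] at hξ
    simp only [hηe ξ hξ]
  have hηi : ∀ i, Continuous (fun ξ => η ξ i) := fun i => (continuous_apply i).comp hηc
  have A2 := h2 y η ⟨hηc.measurable, (continuous_finset_sum _ fun i _ =>
    (hηi i).pow 2).intervalIntegrable _ _⟩
  rw [hK2] at A2
  have e2 : (∫ ξ in (0:ℝ)..1, η ξ ⬝ᵥ (P.Q ξ).mulVec ((S y).mulVec (η ξ + P.K2op ζ))) =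
      ∫ ξ in (0:ℝ)..1, ζ ξ ⬝ᵥ (P.Q ξ).mulVec ((S y).mulVec (ζ ξ + P.K2op ζ)) := by
    apply intervalIntegral.integral_congr
    intro ξ hξ
    rw [uIcc01] at hξ
    simp only [hηe ξ hξ]
  rw [e2] at A2
  have dotc : ∀ u w : ℝ → Vec2, ContinuousOn u (Icc (0:ℝ) 1) → ContinuousOn w (Icc (0:ℝ) 1) →
      IntervalIntegrable (fun ξ => u ξ ⬝ᵥ (P.Q ξ).mulVec (w ξ)) volume 0 1 := by
    intro u w hu hw
    simp only [Q_dot]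
    have hi : ∀ i, ContinuousOn (fun ξ => u ξ i) (Icc (0:ℝ) 1) := fun i =>
      (continuous_apply i).comp_continuousOn hu
    have hj : ∀ i, ContinuousOn (fun ξ => w ξ i) (Icc (0:ℝ) 1) := fun i =>
      (continuous_apply i).comp_continuousOn hw
    exact ii_of_cont (((qf_cont P 0).continuousOn.mul ((hi 0).mul (hj 0))).add
      ((qf_cont P 1).continuousOn.mul ((hi 1).mul (hj 1))))
  have mvc : ∀ (M : Mat2) (w : ℝ → Vec2), ContinuousOn w (Icc (0:ℝ) 1) →
      ContinuousOn (fun ξ => M.mulVec (w ξ)) (Icc (0:ℝ) 1) := fun M w hw =>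
    (Continuous.matrix_mulVec continuous_const continuous_id).comp_continuousOn hw
  have I1 := dotc (P.Aop ζ ζ') ζ (by
    unfold TireParams.Aop
    exact ((mvc _ _ hζ').neg).add continuousOn_const) hζ
  have I2 := dotc ζ (fun ξ => (S y).mulVec (ζ ξ + P.K2op ζ)) hζ
    (mvc _ _ (hζ.add continuousOn_const))
  have e3 : (∫ ξ in (0:ℝ)..1, 2 * (ζt ξ ⬝ᵥ (P.Q ξ).mulVec (ζ ξ))) =
      ∫ ξ in (0:ℝ)..1, (2 * (P.Aop ζ ζ' ξ ⬝ᵥ (P.Q ξ).mulVec (ζ ξ)) +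
        (2 * θ) * (ζ ξ ⬝ᵥ (P.Q ξ).mulVec ((S y).mulVec (ζ ξ + P.K2op ζ)))) := by
    apply intervalIntegral.integral_congr_Ioo_of_le zero_le_one
    intro ξ hξ
    have hh : ζt ξ = θ • (S y).mulVec (ζ ξ + P.K2op ζ) + P.Aop ζ ζ' ξ := by
      have := hpde ξ hξ
      unfold TireParams.Aop
      rw [eq_sub_of_add_eq this]
      abel
    simp only [hh, Q_dot, Pi.add_apply, Pi.smul_apply, smul_eq_mul]
    ring
  rw [e3, intervalIntegral.integral_add (I1.const_mul _) (I2.const_mul _),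
    intervalIntegral.integral_const_mul, intervalIntegral.integral_const_mul]
  have := mul_nonpos_of_nonneg_of_nonpos (by positivity : 0 ≤ 2 * θ) A2
  linarith

/-- Lyapunov function for the observer error dynamics: there exist `P ≻ 0`
symmetric and `φ, ρ > 0`, independent of the input, such that along every observer error
trajectory `V₀(t) = ½X̃ᵀPX̃ + (φ/2)∫₀¹ z̃ᵀQz̃` satisfies `V₀'(t) ≤ −ρV₀(t)`. -/
theorem statement10 (P : TireParams) (θ : ℝ) (hθ : 0 ≤ θ)
    (S : Vec2 → Mat2) (hS : Continuous S)
    (ω : ℝ) (hω : 0 < ω) (h1 : Assumption1 P ω) (h2 : Assumption2 P S)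
    (m Iz l1 l2 : ℝ) (hm : 0 < m) (hIz : 0 < Iz) (hl1 : 0 < l1) (hl2 : 0 < l2)
    (Abar : Mat2) (hAbar : IsHurwitz Abar) :
    ∃ (Pm : Mat2) (φc ρc : ℝ), Pm.PosDef ∧ 0 < φc ∧ 0 < ρc ∧
      ∀ T : ℝ, 0 < T →
      ∀ v : ℝ → Vec2, ContinuousOn v (Icc (0:ℝ) T) →
      ∀ (Xe : ℝ → Vec2) (ze zeξ zet : ℝ → ℝ → Vec2),
        (∀ t ∈ Ioo (0:ℝ) T,
          HasDerivAt Xe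
            (Abar.mulVec (Xe t) +
              (G1mat m Iz l1 l2).mulVec (P.K1op (fun ξ => ze ξ t))) t) →
        ContinuousOn Xe (Icc (0:ℝ) T) →
        IsErrorPDESol P θ S T v ze zeξ zet →
        ∀ t ∈ Ioo (0:ℝ) T,
          ∃ d : ℝ,
            HasDerivAt (fun τ =>
              (1/2) * (Xe τ ⬝ᵥ Pm.mulVec (Xe τ)) +
                (φc/2) * ∫ ξ in (0:ℝ)..1, ze ξ τ ⬝ᵥ (P.Q ξ).mulVec (ze ξ τ)) d t ∧
            d ≤ -ρc * ((1/2) * (Xe t ⬝ᵥ Pm.mulVec (Xe t)) +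
                (φc/2) * ∫ ξ in (0:ℝ)..1, ze ξ t ⬝ᵥ (P.Q ξ).mulVec (ze ξ t)) := by
  obtain ⟨htr, hdet⟩ := hurwitz_tr_det Abar hAbar
  set e : ℝ := -((Abar 0 0 + Abar 1 1) * (Abar 0 0 * Abar 1 1 - Abar 0 1 * Abar 1 0)) / 2 with he
  have hepos : 0 < e := by
    have := mul_neg_of_neg_of_pos htr hdet
    rw [he]; linarith
  obtain ⟨C, hC0, hC⟩ := cross_bound (PL Abar * G1mat m Iz l1 l2) e hepos
  obtain ⟨M, hM0, hM⟩ := kappa_bound P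
  obtain ⟨c1, hc1, hq⟩ := quad_bound (PL Abar)
  obtain ⟨c2, hc2, hW⟩ := W_bound P
  have hφ : 0 < (C * M + 1) / ω := by positivity
  set φc : ℝ := (C * M + 1) / ω with hφdef
  have hφω : φc * ω = C * M + 1 := by rw [hφdef]; field_simp
  set ρ : ℝ := min (2 * e / c1) (2 / (φc * c2)) with hρ
  have hρ0 : 0 < ρ := lt_min (by positivity) (by positivity)
  have hρ1 : ρ * c1 ≤ 2 * e := (le_div_iff₀ hc1).1 (min_le_left _ _)
  have hρ2 : ρ * (φc * c2) ≤ 2 := (le_div_iff₀ (by positivity)).1 (min_le_right _ _)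
  refine ⟨PL Abar, φc, ρ, PL_posDef _ hdet, hφ, hρ0, ?_⟩
  intro T hT v hv Xe ze zeξ zet hX hXc hsol t ht
  obtain ⟨s1, s2, s3, s4, s5, s6, s7⟩ := hsol
  have htc : t ∈ Icc (0:ℝ) T := Ioo_subset_Icc_self ht
  have hdW := W_deriv P T ze zet s2 s3 s5 t ht
  have hdX := quad_deriv (PL Abar) (by simp [PL]) Xe _ t (hX t ht)
  refine ⟨_, (hdX.const_mul (1/2)).add (hdW.const_mul (φc/2)), ?_⟩
  have hC1 : IsC1On01 (fun ξ => ze ξ t) (fun ξ => zeξ ξ t) := by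
    refine ⟨s1 t htc, ?_⟩
    exact s4.comp (f := fun ξ : ℝ => (ξ, t)) (by fun_prop) (fun ξ hξ => ⟨hξ, htc⟩)
  have hcont : ContinuousOn (fun ξ => ze ξ t) (Icc (0:ℝ) 1) :=
    fun ξ hξ => (hC1.1 ξ hξ).continuousWithinAt
  have B1 := W_dissip P θ hθ S ω h1 h2 (v t) (fun ξ => ze ξ t) (fun ξ => zeξ ξ t)
    (fun ξ => zet ξ t) hC1 (s7 t htc) (fun ξ hξ => s6 ξ hξ t ht)
  have B2 := hM _ hcont
  have B3 := hW _ hcont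
  have B4 := hq (Xe t)
  have B5 := hC (Xe t) (P.K1op (fun ξ => ze ξ t))
  have hN : 0 ≤ ∫ ξ in (0:ℝ)..1, ∑ i, (ze ξ t i) ^ 2 :=
    intervalIntegral.integral_nonneg zero_le_one fun ξ _ =>
      Finset.sum_nonneg fun i _ => sq_nonneg _
  have hn : 0 ≤ Xe t 0 ^ 2 + Xe t 1 ^ 2 := by positivity
  rw [Matrix.mulVec_add, dotProduct_add, PL_lyap, Matrix.mulVec_mulVec]
  beta_reduce at B1 B2 B3
  set κ := P.K1op (fun ξ => ze ξ t)
  set N := ∫ ξ in (0:ℝ)..1, ∑ i, (ze ξ t i) ^ 2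
  set W := ∫ ξ in (0:ℝ)..1, ze ξ t ⬝ᵥ (P.Q ξ).mulVec (ze ξ t)
  set W' := ∫ ξ in (0:ℝ)..1, 2 * (zet ξ t ⬝ᵥ (P.Q ξ).mulVec (ze ξ t))
  set n := Xe t 0 ^ 2 + Xe t 1 ^ 2
  set Y := Xe t ⬝ᵥ (PL Abar).mulVec (Xe t)
  have hτδ : (Abar 0 0 + Abar 1 1) * (Abar 0 0 * Abar 1 1 - Abar 0 1 * Abar 1 0) = -2 * e := by
    rw [he]; ring
  rw [hτδ]
  have U1 : φc / 2 * W' ≤ -(C * M + 1) * N := by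
    have := mul_le_mul_of_nonneg_left B1 (by positivity : 0 ≤ φc / 2)
    have e1 : φc / 2 * (-(2 * ω) * N) = -(φc * ω) * N := by ring
    rwa [e1, hφω] at this
  have U2 := mul_le_mul_of_nonneg_left B2 hC0
  have U3 : ρ * Y ≤ 2 * e * n := by
    have a := mul_le_mul_of_nonneg_left B4 hρ0.le
    have b := mul_le_mul_of_nonneg_right hρ1 hn
    linarith
  have U4 : ρ * (φc * W) ≤ 2 * N := by
    have a := mul_le_mul_of_nonneg_left B3 (by positivity : 0 ≤ ρ * φc)
    have b := mul_le_mul_of_nonneg_right hρ2 hN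
    linarith
  linarith
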